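/- There exist universal constants γ > 0 and ε₀ > 0 such that the following holds with the universal constant C from the generating-set lemma. Let 0 < ε ≤ ε₀, let 𝒢 ⊂ SL₂(ℝ) be a finite set and Q a positive integer with (1/ε)^{1/C} < Q < (1/ε)^C and Q < |𝒢|^C, such that the elements of 𝒢 freely generate a free subgroup, every entry of every g ∈ 𝒢 lies in (1/Q)·ℤ, and every g ∈ 𝒢 satisfies ‖g−1‖² ≤ ε. Then for every sufficiently small δ > 0 and every integer ℓ₀ ≥ log(1/δ)/log Q, the density μ = ν^{(ℓ₀)} ∗ P_δ satisfies ‖μ‖₂ ≤ δ^{−3/2+γ}. -/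

import Mathlib

/-! # Initial flatness from Kesten's bound and separation of short words

The estimate is proved for every prescribed constant `C > 0` (`initial_flatness_of_constant`), with
`γ = 1 / (48 C)` and `ε₀ = 4^{-C²}`; the stated theorem is one instance.

Let `φ` be the embedding of the free group on `𝒢`, and `k = |𝒢|`. A word of length at most `2n` is sent
by `φ` to a matrix with entries in `Q^{-2n} ℤ`. Choosing `n` with `Q^{3n} ≈ 1/δ`, two different words of
length at most `n` therefore cannot both move a point `x` into the ball of radius `δ`. So the value of
`ν^{(n)} ∗ P_δ` at `x` is at most `m(B_δ)⁻¹` times the probability that the walk on the free group is at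
a single given word, which is at most `(2/k)^{n/2}` by Kesten's bound (`kesten_step`, `nuPow_le_kesten`: the
function `(2k)^{-|w|/2}` is a supersolution for the walk). As `k ≥ Q^{1/C}` is large, this is a fixed
positive power of `δ`, up to a constant depending on `Q`.

The supremum does not increase under further convolution with `ν`, which handles all `ℓ₀ ≥ n`, and the
total mass stays equal to `1` by left invariance of `m`. Hence `‖μ‖₂² ≤ ‖μ‖_∞ ‖μ‖₁` is at most
`m(B_δ)⁻¹` times a power of `δ`. Covering a fixed ball by `O(δ⁻³)` left translates of `B_δ` gives
`m(B_δ) ≥ c δ³` (`ball_volume_lower`). The constants depending on `m` and `Q` are absorbed by taking `δ`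
small.
-/


open MeasureTheory Set

/-- `SL₂(ℝ)`. -/
abbrev SL2R := Matrix.SpecialLinearGroup (Fin 2) ℝ

/-- The Borel σ-algebra on `SL₂(ℝ)`, via the entries of the matrix. -/
instance : MeasurableSpace SL2R :=
  MeasurableSpace.comap (fun g i j => (g : Matrix (Fin 2) (Fin 2) ℝ) i j)
    (inferInstance : MeasurableSpace (Fin 2 → Fin 2 → ℝ))

/-- The Frobenius distance between two elements of `SL₂(ℝ)`. -/
noncomputable def frobDistSL (g h : SL2R) : ℝ :=
  Real.sqrt (∑ i : Fin 2, ∑ j : Fin 2,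
    ((g : Matrix (Fin 2) (Fin 2) ℝ) i j - (h : Matrix (Fin 2) (Fin 2) ℝ) i j) ^ 2)

/-- The ball of radius `r` around the identity in `SL₂(ℝ)` (Frobenius metric). -/
def ballSL (r : ℝ) : Set SL2R := {x | frobDistSL x 1 ≤ r}

/-- `P_δ`, the density (w.r.t. the Haar measure `m`) of the uniform probability measure
on the ball of radius `δ` around the identity. -/
noncomputable def Pdelta (m : Measure SL2R) (δ : ℝ) : SL2R → ℝ :=
  (ballSL δ).indicator fun _ => ((m (ballSL δ)).toReal)⁻¹

/-- Convolution of the measure `ν = (2|𝒢|)⁻¹ Σ_{g∈𝒢} (δ_g + δ_{g⁻¹})` with a density `f`. -/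
noncomputable def nuStep (𝒢 : Finset SL2R) (f : SL2R → ℝ) : SL2R → ℝ :=
  fun x => (2 * (𝒢.card : ℝ))⁻¹ * ∑ g ∈ 𝒢, (f (g⁻¹ * x) + f (g * x))

/-- `ν^{(ℓ)} ∗ f`: the `ℓ`-fold convolution of `ν` applied to the density `f`. -/
noncomputable def nuPow (𝒢 : Finset SL2R) (f : SL2R → ℝ) : ℕ → SL2R → ℝ
  | 0 => f
  | n + 1 => nuStep 𝒢 (nuPow 𝒢 f n)

/-! ### The random walk on the free group -/

section FreeGroupWalk

variable {α : Type*} [DecidableEq α]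

/-- Multiplying by a letter lengthens the reduced word by one, unless the letter is the inverse of the
first letter of the word, in which case it shortens it by one. -/
theorem norm_letter_mul (a : α) (b : Bool) (z : FreeGroup α) :
    (FreeGroup.mk [(a, b)] * z).norm = z.norm + 1 ∨
      (z.toWord.head? = some (a, !b) ∧ (FreeGroup.mk [(a, b)] * z).norm + 1 = z.norm) := by
  have hz : FreeGroup.mk [(a, b)] * z = FreeGroup.mk ((a, b) :: z.toWord) := by
    conv_lhs => rw [← FreeGroup.mk_toWord (x := z), FreeGroup.mul_mk]
    rfl
  rw [hz]
  unfold FreeGroup.norm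
  rw [FreeGroup.toWord_mk, FreeGroup.reduce.cons, FreeGroup.reduce_toWord]
  cases h : z.toWord with
  | nil => left; rfl
  | cons hd tl =>
    obtain ⟨a', b'⟩ := hd
    by_cases hc : a = a' ∧ b = !b'
    · right
      simp [hc]
    · left
      simp only [if_neg hc, List.length_cons]

/-- With `s = √(2k)`, the function `z ↦ s^{-|z|}` on the free group of rank `k` is a supersolution for
the sum over the `2k` neighbours, with eigenvalue `2s`: at most one neighbour is closer to the identity.
This is Kesten's bound, up to replacing `2√(2k-1)` by `2√(2k)`. -/
theorem kesten_step [Fintype α] (s : ℝ) (hs : 0 < s)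
    (hs2 : s ^ 2 = 2 * (Fintype.card α : ℝ)) (z : FreeGroup α) :
    ∑ a : α, (s⁻¹ ^ ((FreeGroup.of a)⁻¹ * z).norm + s⁻¹ ^ (FreeGroup.of a * z).norm)
      ≤ 2 * s * s⁻¹ ^ z.norm := by
  have key : ∀ (a : α) (b : Bool), s⁻¹ ^ (FreeGroup.mk [(a, b)] * z).norm ≤
      s⁻¹ * s⁻¹ ^ z.norm + if z.toWord.head? = some (a, !b) then s * s⁻¹ ^ z.norm else 0 := by
    intro a b
    rcases norm_letter_mul a b z with h | ⟨h1, h2⟩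
    · rw [h, pow_succ, mul_comm]
      have : 0 ≤ (if z.toWord.head? = some (a, !b) then s * s⁻¹ ^ z.norm else 0) := by
        split_ifs <;> positivity
      linarith
    · rw [if_pos h1, ← h2, pow_succ]
      have h3 : s * (s⁻¹ ^ (FreeGroup.mk [(a, b)] * z).norm * s⁻¹) =
        s⁻¹ ^ (FreeGroup.mk [(a, b)] * z).norm := by field_simp
      rw [h3]
      have : 0 ≤ s⁻¹ * (s⁻¹ ^ (FreeGroup.mk [(a, b)] * z).norm * s⁻¹) := by positivity
      linarith
  have hsum : ∑ a : α, (s⁻¹ ^ ((FreeGroup.of a)⁻¹ * z).norm + s⁻¹ ^ (FreeGroup.of a * z).norm)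
      = ∑ p : α × Bool, s⁻¹ ^ (FreeGroup.mk [(p.1, p.2)] * z).norm := by
    rw [Fintype.sum_prod_type]
    refine Finset.sum_congr rfl fun a _ => ?_
    rw [Fintype.sum_bool, add_comm]
    rfl
  rw [hsum]
  refine (Finset.sum_le_sum fun p _ => key p.1 p.2).trans ?_
  rw [Finset.sum_add_distrib, Finset.sum_const, Finset.card_univ, Fintype.card_prod,
    Fintype.card_bool, nsmul_eq_mul]
  have hif : ∑ p : α × Bool,
      (if z.toWord.head? = some (p.1, !p.2) then s * s⁻¹ ^ z.norm else 0) ≤ s * s⁻¹ ^ z.norm := by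
    rw [← Finset.sum_filter, Finset.sum_const, nsmul_eq_mul]
    have hc : (Finset.univ.filter
        fun p : α × Bool => z.toWord.head? = some (p.1, !p.2)).card ≤ 1 := by
      refine Finset.card_le_one.2 ?_
      rintro ⟨a, b⟩ h ⟨a', b'⟩ h'
      simp only [Finset.mem_filter, Finset.mem_univ, true_and] at h h'
      rw [h] at h'
      simpa using h'
    have : (((Finset.univ.filter
        fun p : α × Bool => z.toWord.head? = some (p.1, !p.2)).card : ℕ) : ℝ) ≤ 1 := by
      exact_mod_cast hc
    have h0 : 0 ≤ s * s⁻¹ ^ z.norm := by positivity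
    nlinarith
  have hmain : ((Fintype.card α * 2 : ℕ) : ℝ) * (s⁻¹ * s⁻¹ ^ z.norm) = s * s⁻¹ ^ z.norm := by
    push_cast
    rw [mul_comm (Fintype.card α : ℝ) 2, ← hs2]
    field_simp
  rw [hmain]
  linarith

end FreeGroupWalk

open Classical in
/-- Kesten's bound along an orbit. If among the words `w` of length at most `n` only `w₀` has
`f (φ(w) x)` positive, then the walk spreads this value over the free group, at rate `2 / s` per step. The
constraint `|w| + j ≤ n` keeps the `j`-step walk inside the range where the hypothesis applies. -/
theorem nuPow_le_kesten (𝒢 : Finset SL2R) (f : SL2R → ℝ) (M s : ℝ) (hM : 0 ≤ M) (hs : 0 < s)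
    (hs2 : s ^ 2 = 2 * (𝒢.card : ℝ)) (n : ℕ) (x : SL2R) (w₀ : FreeGroup {x // x ∈ 𝒢})
    (hf : ∀ w : FreeGroup {x // x ∈ 𝒢}, w.norm ≤ n →
      f (FreeGroup.lift (fun g : {x // x ∈ 𝒢} => (g : SL2R)) w * x) ≤ if w = w₀ then M else 0)
    (j : ℕ) (w : FreeGroup {x // x ∈ 𝒢}) (hw : w.norm + j ≤ n) :
    nuPow 𝒢 f j (FreeGroup.lift (fun g : {x // x ∈ 𝒢} => (g : SL2R)) w * x) ≤
      M * (2 / s) ^ j * s⁻¹ ^ (w * w₀⁻¹).norm := by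
  induction j generalizing w with
  | zero =>
    refine (hf w hw).trans ?_
    split_ifs with h
    · simp [h]
    · positivity
  | succ j ih =>
    set φ := FreeGroup.lift (fun g : {x // x ∈ 𝒢} => (g : SL2R)) with hφ
    have hstep := kesten_step s hs (by simpa using hs2) (w * w₀⁻¹)
    have hA : ∀ a : {x // x ∈ 𝒢},
        nuPow 𝒢 f j ((a : SL2R)⁻¹ * (φ w * x)) + nuPow 𝒢 f j ((a : SL2R) * (φ w * x)) ≤
        M * (2 / s) ^ j * (s⁻¹ ^ ((FreeGroup.of a)⁻¹ * (w * w₀⁻¹)).norm +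
          s⁻¹ ^ (FreeGroup.of a * (w * w₀⁻¹)).norm) := by
      intro a
      have ha : φ (FreeGroup.of a) = (a : SL2R) := by simp [hφ]
      have h1 := ih ((FreeGroup.of a)⁻¹ * w) (by
        have := FreeGroup.norm_mul_le (FreeGroup.of a)⁻¹ w
        rw [FreeGroup.norm_inv_eq, FreeGroup.norm_of] at this
        omega)
      have h2 := ih (FreeGroup.of a * w) (by
        have := FreeGroup.norm_mul_le (FreeGroup.of a) w
        rw [FreeGroup.norm_of] at this
        omega)
      rw [map_mul, map_inv, ha, mul_assoc (a : SL2R)⁻¹, mul_assoc (FreeGroup.of a)⁻¹] at h1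
      rw [map_mul, ha, mul_assoc (a : SL2R), mul_assoc (FreeGroup.of a)] at h2
      rw [mul_add]
      exact add_le_add h1 h2
    have hsum : ∑ g ∈ 𝒢, (nuPow 𝒢 f j (g⁻¹ * (φ w * x)) + nuPow 𝒢 f j (g * (φ w * x))) ≤
        M * (2 / s) ^ j * (2 * s * s⁻¹ ^ (w * w₀⁻¹).norm) := by
      rw [← Finset.sum_coe_sort 𝒢
        (fun g => nuPow 𝒢 f j (g⁻¹ * (φ w * x)) + nuPow 𝒢 f j (g * (φ w * x)))]
      refine (Finset.sum_le_sum fun a _ => hA a).trans ?_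
      rw [← Finset.mul_sum]
      exact mul_le_mul_of_nonneg_left hstep (by positivity)
    change (2 * (𝒢.card : ℝ))⁻¹ * ∑ g ∈ 𝒢,
      (nuPow 𝒢 f j (g⁻¹ * (φ w * x)) + nuPow 𝒢 f j (g * (φ w * x))) ≤ _
    rw [← hs2]
    refine (mul_le_mul_of_nonneg_left hsum (by positivity)).trans (le_of_eq ?_)
    rw [pow_succ (2 / s) j]
    field_simp

/-! ### Arithmetic of the entries -/

/-- All entries of `g` lie in `Q⁻ⁿ ℤ`. -/
def EntriesIn (Q n : ℕ) (g : SL2R) : Prop :=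
  ∀ i j : Fin 2, ∃ z : ℤ, (Q : ℝ) ^ n * (g : Matrix (Fin 2) (Fin 2) ℝ) i j = z

theorem EntriesIn.mul {Q a b : ℕ} {g h : SL2R} (hg : EntriesIn Q a g) (hh : EntriesIn Q b h) :
    EntriesIn Q (a + b) (g * h) := by
  intro i j
  obtain ⟨z0, h0⟩ := hg i 0
  obtain ⟨z1, h1⟩ := hg i 1
  obtain ⟨y0, k0⟩ := hh 0 j
  obtain ⟨y1, k1⟩ := hh 1 j
  refine ⟨z0 * y0 + z1 * y1, ?_⟩
  rw [Matrix.SpecialLinearGroup.coe_mul, Matrix.mul_apply, Fin.sum_univ_two]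
  push_cast
  rw [← h0, ← h1, ← k0, ← k1]
  ring

theorem EntriesIn.one {Q : ℕ} : EntriesIn Q 0 1 := by
  intro i j
  refine ⟨if i = j then 1 else 0, ?_⟩
  rw [Matrix.SpecialLinearGroup.coe_one, Matrix.one_apply]
  split_ifs <;> simp

theorem EntriesIn.inv {Q n : ℕ} {g : SL2R} (hg : EntriesIn Q n g) : EntriesIn Q n g⁻¹ := by
  obtain ⟨z00, h00⟩ := hg 0 0
  obtain ⟨z01, h01⟩ := hg 0 1
  obtain ⟨z10, h10⟩ := hg 1 0
  obtain ⟨z11, h11⟩ := hg 1 1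
  intro i j
  rw [Matrix.SpecialLinearGroup.SL2_inv_expl]
  fin_cases i <;> fin_cases j
  · exact ⟨z11, by simpa using h11⟩
  · exact ⟨-z01, by simpa using h01⟩
  · exact ⟨-z10, by simpa using h10⟩
  · exact ⟨z00, by simpa using h00⟩

theorem entriesIn_lift (𝒢 : Finset SL2R) (Q : ℕ) (h𝒢 : ∀ g ∈ 𝒢, EntriesIn Q 1 g)
    (L : List ({x // x ∈ 𝒢} × Bool)) :
    EntriesIn Q L.length
      (FreeGroup.lift (fun g : {x // x ∈ 𝒢} => (g : SL2R)) (FreeGroup.mk L)) := by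
  induction L with
  | nil =>
    rw [← FreeGroup.one_eq_mk, map_one]
    exact EntriesIn.one
  | cons p L ih =>
    obtain ⟨a, b⟩ := p
    have : FreeGroup.mk ((a, b) :: L) = FreeGroup.mk [(a, b)] * FreeGroup.mk L := by
      rw [FreeGroup.mul_mk]; rfl
    rw [this, map_mul, List.length_cons, add_comm]
    refine EntriesIn.mul ?_ ih
    cases b
    · have : FreeGroup.mk [(a, false)] = (FreeGroup.of a)⁻¹ := rfl
      rw [this, map_inv, FreeGroup.lift_apply_of]
      exact (h𝒢 a a.2).inv
    · have : FreeGroup.mk [(a, true)] = FreeGroup.of a := rfl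
      rw [this, FreeGroup.lift_apply_of]
      exact h𝒢 a a.2

theorem abs_entry_sub_le (g h : SL2R) (i j : Fin 2) :
    |(g : Matrix (Fin 2) (Fin 2) ℝ) i j - (h : Matrix (Fin 2) (Fin 2) ℝ) i j| ≤
      frobDistSL g h := by
  refine Real.abs_le_sqrt ?_
  refine (Finset.single_le_sum (f := fun j => ((g : Matrix (Fin 2) (Fin 2) ℝ) i j -
    (h : Matrix (Fin 2) (Fin 2) ℝ) i j) ^ 2) (fun _ _ => sq_nonneg _) (Finset.mem_univ j)).trans ?_
  exact Finset.single_le_sum (f := fun i => ∑ j : Fin 2, ((g : Matrix (Fin 2) (Fin 2) ℝ) i j -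
    (h : Matrix (Fin 2) (Fin 2) ℝ) i j) ^ 2) (fun _ _ => Finset.sum_nonneg fun _ _ => sq_nonneg _)
    (Finset.mem_univ i)

/-- Elements with entries in `Q⁻ⁿ ℤ` that are closer to `1` than `Q⁻ⁿ` are equal to `1`. -/
theorem eq_one_of_small {Q n : ℕ} {g : SL2R} (hg : EntriesIn Q n g) {η : ℝ}
    (hη : (Q : ℝ) ^ n * η < 1)
    (h : ∀ i j : Fin 2, |(g : Matrix (Fin 2) (Fin 2) ℝ) i j - (1 : Matrix (Fin 2) (Fin 2) ℝ) i j|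
      ≤ η) (hQ : 0 < Q) : g = 1 := by
  have hQ' : (0 : ℝ) < (Q : ℝ) ^ n := by positivity
  ext i j
  rw [Matrix.SpecialLinearGroup.coe_one]
  obtain ⟨z, hz⟩ := hg i j
  set e : ℤ := if i = j then 1 else 0 with he
  have h1 : (1 : Matrix (Fin 2) (Fin 2) ℝ) i j = (e : ℝ) := by
    rw [Matrix.one_apply, he]; split_ifs <;> simp
  have h2 := h i j
  rw [h1] at h2 ⊢
  have h3 : |((z - (Q : ℤ) ^ n * e : ℤ) : ℝ)| < 1 := by
    push_cast
    rw [← hz, ← mul_sub, abs_mul, abs_of_pos hQ']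
    exact (mul_le_mul_of_nonneg_left h2 hQ'.le).trans_lt hη
  have h4 : z - (Q : ℤ) ^ n * e = 0 := by
    rw [← Int.abs_lt_one_iff]
    exact_mod_cast h3
  have h5 : (z : ℝ) = (Q : ℝ) ^ n * e := by
    have := sub_eq_zero.1 h4
    rw [this]; push_cast; rfl
  rw [h5] at hz
  exact mul_left_cancel₀ hQ'.ne' hz

theorem entries_of_mem_ballSL {δ : ℝ} {y : SL2R} (hy : y ∈ ballSL δ) (i j : Fin 2) :
    |(y : Matrix (Fin 2) (Fin 2) ℝ) i j - (1 : Matrix (Fin 2) (Fin 2) ℝ) i j| ≤ δ := by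
  have := (abs_entry_sub_le y 1 i j).trans hy
  rwa [Matrix.SpecialLinearGroup.coe_one] at this

theorem mul_inv_near_one {δ : ℝ} (hδ : δ ≤ 1 / 2) {y z : SL2R}
    (hy : y ∈ ballSL δ) (hz : z ∈ ballSL δ) (i j : Fin 2) :
    |((y * z⁻¹ : SL2R) : Matrix (Fin 2) (Fin 2) ℝ) i j - (1 : Matrix (Fin 2) (Fin 2) ℝ) i j|
      ≤ 4 * δ := by
  have hδ0 : 0 ≤ δ := (abs_nonneg _).trans (entries_of_mem_ballSL hy 0 0)
  have hdet : z 0 0 * z 1 1 - z 0 1 * z 1 0 = 1 := by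
    rw [← Matrix.det_fin_two]; exact z.2
  have y00 := abs_le.1 (entries_of_mem_ballSL hy 0 0)
  have y01 := abs_le.1 (entries_of_mem_ballSL hy 0 1)
  have y10 := abs_le.1 (entries_of_mem_ballSL hy 1 0)
  have y11 := abs_le.1 (entries_of_mem_ballSL hy 1 1)
  have z00 := abs_le.1 (entries_of_mem_ballSL hz 0 0)
  have z01 := abs_le.1 (entries_of_mem_ballSL hz 0 1)
  have z10 := abs_le.1 (entries_of_mem_ballSL hz 1 0)
  have z11 := abs_le.1 (entries_of_mem_ballSL hz 1 1)
  simp only [Matrix.one_apply, Fin.isValue, zero_ne_one, one_ne_zero, if_true, if_false,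
    sub_zero] at y00 y01 y10 y11 z00 z01 z10 z11
  have bd : ∀ p q u v : ℝ, |p| ≤ 2 * δ → |q| ≤ 2 * δ → |u| ≤ 3 / 2 → |v| ≤ 1 / 2 →
      |p * u + q * v| ≤ 4 * δ := by
    intro p q u v hp hq hu hv
    refine (abs_add_le _ _).trans ?_
    rw [abs_mul, abs_mul]
    have := mul_le_mul hp hu (abs_nonneg _) (by linarith)
    have := mul_le_mul hq hv (abs_nonneg _) (by linarith)
    linarith
  have a1 : |y 0 0 - z 0 0| ≤ 2 * δ := abs_le.2 ⟨by linarith, by linarith⟩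
  have a2 : |y 0 1 - z 0 1| ≤ 2 * δ := abs_le.2 ⟨by linarith, by linarith⟩
  have a3 : |y 1 0 - z 1 0| ≤ 2 * δ := abs_le.2 ⟨by linarith, by linarith⟩
  have a4 : |y 1 1 - z 1 1| ≤ 2 * δ := abs_le.2 ⟨by linarith, by linarith⟩
  have b1 : |z 0 0| ≤ 3 / 2 := abs_le.2 ⟨by linarith, by linarith⟩
  have b2 : |-z 0 1| ≤ 1 / 2 := abs_le.2 ⟨by linarith, by linarith⟩
  have b3 : |-z 1 0| ≤ 1 / 2 := abs_le.2 ⟨by linarith, by linarith⟩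
  have b4 : |z 1 1| ≤ 3 / 2 := abs_le.2 ⟨by linarith, by linarith⟩
  rw [Matrix.SpecialLinearGroup.coe_mul, Matrix.mul_apply, Fin.sum_univ_two,
    Matrix.SpecialLinearGroup.SL2_inv_expl]
  fin_cases i <;> fin_cases j <;> simp
  · convert bd _ _ _ _ a1 a2 b4 b3 using 2; linear_combination hdet
  · convert bd _ _ _ _ a2 a1 b1 b2 using 2; ring
  · convert bd _ _ _ _ a3 a4 b4 b3 using 2; ring
  · convert bd _ _ _ _ a4 a3 b1 b2 using 2; linear_combination hdet

/-! ### The volume of small balls -/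

/-- On `ballSL (1 / 4)` the entries `(0,0)`, `(0,1)`, `(1,0)` are coordinates: if they agree up to the
grid of mesh `1 / N`, so does the remaining entry up to `3 / N`, and `x⁻¹ y` is within `10 / N` of `1`. -/
theorem inv_mul_mem_ballSL {N : ℕ} (hN : 0 < N) {δ : ℝ} (hδ : 10 / (N : ℝ) ≤ δ) {x y : SL2R}
    (hx : x ∈ ballSL (1 / 4)) (hy : y ∈ ballSL (1 / 4))
    (h00 : ⌊(N : ℝ) * x 0 0⌋ = ⌊(N : ℝ) * y 0 0⌋)
    (h01 : ⌊(N : ℝ) * x 0 1⌋ = ⌊(N : ℝ) * y 0 1⌋)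
    (h10 : ⌊(N : ℝ) * x 1 0⌋ = ⌊(N : ℝ) * y 1 0⌋) : x⁻¹ * y ∈ ballSL δ := by
  have hN' : (0 : ℝ) < N := by exact_mod_cast hN
  set t : ℝ := 1 / (N : ℝ) with ht
  have ht0 : 0 < t := by positivity
  have hNt : (N : ℝ) * t = 1 := by rw [ht]; field_simp
  have cell : ∀ u v : ℝ, ⌊(N : ℝ) * u⌋ = ⌊(N : ℝ) * v⌋ → |v - u| ≤ t := by
    intro u v h
    have h1 := (Int.abs_sub_lt_one_of_floor_eq_floor h).le
    rw [← mul_sub, abs_mul, abs_of_pos hN'] at h1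
    rw [abs_sub_comm]
    have : (N : ℝ) * |u - v| ≤ N * t := by rw [hNt]; exact h1
    exact le_of_mul_le_mul_left this hN'
  have d00 := cell _ _ h00
  have d01 := cell _ _ h01
  have d10 := cell _ _ h10
  have hdx : x 0 0 * x 1 1 - x 0 1 * x 1 0 = 1 := by
    rw [← Matrix.det_fin_two]; exact x.2
  have hdy : y 0 0 * y 1 1 - y 0 1 * y 1 0 = 1 := by
    rw [← Matrix.det_fin_two]; exact y.2
  have x00 := abs_le.1 (entries_of_mem_ballSL hx 0 0)
  have x01 := entries_of_mem_ballSL hx 0 1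
  have x10 := entries_of_mem_ballSL hx 1 0
  have x11 := abs_le.1 (entries_of_mem_ballSL hx 1 1)
  have y01 := entries_of_mem_ballSL hy 0 1
  have y10 := entries_of_mem_ballSL hy 1 0
  have y11 := abs_le.1 (entries_of_mem_ballSL hy 1 1)
  simp only [Matrix.one_apply, Fin.isValue, zero_ne_one, one_ne_zero, if_true, if_false,
    sub_zero] at x00 x01 x10 x11 y01 y10 y11
  have X00 : |x 0 0| ≤ 5 / 4 := abs_le.2 ⟨by linarith, by linarith⟩
  have X11 : |x 1 1| ≤ 5 / 4 := abs_le.2 ⟨by linarith, by linarith⟩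
  have Y11 : |y 1 1| ≤ 5 / 4 := abs_le.2 ⟨by linarith, by linarith⟩
  have prod : ∀ p q A B : ℝ, |p| ≤ A → |q| ≤ B → |p * q| ≤ A * B := by
    intro p q A B hp hq
    rw [abs_mul]
    exact mul_le_mul hp hq (abs_nonneg _) ((abs_nonneg _).trans hp)
  -- the fourth entry is controlled by the other three through `det = 1`
  have d11 : |y 1 1 - x 1 1| ≤ 3 * t := by
    have e : x 0 0 * (y 1 1 - x 1 1) = (y 0 1 - x 0 1) * y 1 0 + x 0 1 * (y 1 0 - x 1 0)
        - (y 0 0 - x 0 0) * y 1 1 := by linear_combination hdy - hdx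
    have e1 := abs_le.1 (prod _ _ _ _ d01 y10)
    have e2 := abs_le.1 (prod _ _ _ _ x01 d10)
    have e3 := abs_le.1 (prod _ _ _ _ d00 Y11)
    have e4 : |x 0 0 * (y 1 1 - x 1 1)| ≤ 7 / 4 * t := by
      rw [e]; exact abs_le.2 ⟨by linarith, by linarith⟩
    rw [abs_mul] at e4
    have e5 : 3 / 4 ≤ |x 0 0| := by
      rw [abs_of_pos (by linarith)]; linarith
    have e6 := mul_le_mul_of_nonneg_right e5 (abs_nonneg (y 1 1 - x 1 1))
    linarith
  have w00 : |y 0 0 - x 0 0| ≤ 3 * t := by linarith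
  have w01 : |y 0 1 - x 0 1| ≤ 3 * t := by linarith
  have w10 : |y 1 0 - x 1 0| ≤ 3 * t := by linarith
  have x01' : |-x 0 1| ≤ 1 / 4 := by rwa [abs_neg]
  have x10' : |-x 1 0| ≤ 1 / 4 := by rwa [abs_neg]
  have bd : ∀ p q u v : ℝ, |p| ≤ 5 / 4 → |q| ≤ 1 / 4 → |u| ≤ 3 * t → |v| ≤ 3 * t →
      (p * u + q * v) ^ 2 ≤ (5 * t) ^ 2 := by
    intro p q u v hp hq hu hv
    refine sq_le_sq.2 ?_
    rw [abs_of_pos (by positivity : 0 < 5 * t)]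
    have e1 := prod _ _ _ _ hp hu
    have e2 := prod _ _ _ _ hq hv
    refine (abs_add_le _ _).trans ?_
    linarith
  have f00 := bd _ _ _ _ X11 x01' w00 w10
  have f01 := bd _ _ _ _ X11 x01' w01 d11
  have f10 := bd _ _ _ _ X00 x10' w10 w00
  have f11 := bd _ _ _ _ X00 x10' d11 w01
  change frobDistSL (x⁻¹ * y) 1 ≤ δ
  refine le_trans ?_ hδ
  have h10t : 10 / (N : ℝ) = 10 * t := by rw [ht]; ring
  rw [h10t]
  refine Real.sqrt_le_iff.2 ⟨by positivity, ?_⟩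
  simp only [Fin.sum_univ_two, Matrix.SpecialLinearGroup.coe_mul, Matrix.mul_apply,
    Matrix.SpecialLinearGroup.coe_one]
  rw [Matrix.SpecialLinearGroup.SL2_inv_expl]
  simp
  have g00 : x 1 1 * y 0 0 + -(x 0 1 * y 1 0) - 1 =
    x 1 1 * (y 0 0 - x 0 0) + -x 0 1 * (y 1 0 - x 1 0) := by linear_combination hdx
  have g01 : x 1 1 * y 0 1 + -(x 0 1 * y 1 1) =
    x 1 1 * (y 0 1 - x 0 1) + -x 0 1 * (y 1 1 - x 1 1) := by ring
  have g10 : -(x 1 0 * y 0 0) + x 0 0 * y 1 0 =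
    x 0 0 * (y 1 0 - x 1 0) + -x 1 0 * (y 0 0 - x 0 0) := by ring
  have g11 : -(x 1 0 * y 0 1) + x 0 0 * y 1 1 - 1 =
    x 0 0 * (y 1 1 - x 1 1) + -x 1 0 * (y 0 1 - x 0 1) := by linear_combination hdx
  rw [g00, g01, g10, g11]
  have hsq : (10 * t) ^ 2 = 4 * (5 * t) ^ 2 := by ring
  linarith

/-- Volume packing: the `(2N+1)³` grid cells of mesh `1 / N` cover `ballSL (1 / 4)`, and each nonempty
cell is contained in a left translate of `ballSL δ`. -/
theorem measure_ball_le (m : Measure SL2R)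
    (hinv : ∀ (g : SL2R) (s : Set SL2R), m ((fun x => g * x) ⁻¹' s) = m s)
    {N : ℕ} (hN : 0 < N) {δ : ℝ} (hδ : 10 / (N : ℝ) ≤ δ) :
    m (ballSL (1 / 4)) ≤ ((3 * N) ^ 3 : ℕ) * m (ballSL δ) := by
  have hN' : (1 : ℝ) ≤ N := by exact_mod_cast hN
  set I : Finset ℤ := Finset.Icc 0 (2 * (N : ℤ)) with hI
  set J : Finset ℤ := Finset.Icc (-(N : ℤ)) N with hJ
  set cell : ℤ × ℤ × ℤ → Set SL2R := fun c => {x | x ∈ ballSL (1 / 4) ∧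
    ⌊(N : ℝ) * x 0 0⌋ = c.1 ∧ ⌊(N : ℝ) * x 0 1⌋ = c.2.1 ∧ ⌊(N : ℝ) * x 1 0⌋ = c.2.2} with hcell
  have hcov : ballSL (1 / 4) ⊆ ⋃ c ∈ I ×ˢ J ×ˢ J, cell c := by
    intro x hx
    have x00 := abs_le.1 (entries_of_mem_ballSL hx 0 0)
    have x01 := abs_le.1 (entries_of_mem_ballSL hx 0 1)
    have x10 := abs_le.1 (entries_of_mem_ballSL hx 1 0)
    simp only [Matrix.one_apply, Fin.isValue, zero_ne_one, one_ne_zero, if_true, if_false,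
      sub_zero] at x00 x01 x10
    have side : ∀ u : ℝ, -(1 / 4) ≤ u ∧ u ≤ 1 / 4 → ⌊(N : ℝ) * u⌋ ∈ J := by
      intro u hu
      rw [hJ, Finset.mem_Icc]
      constructor
      · rw [Int.le_floor]; push_cast; nlinarith
      · have : ((⌊(N : ℝ) * u⌋ : ℤ) : ℝ) ≤ ((N : ℤ) : ℝ) := by
          refine (Int.floor_le _).trans ?_
          push_cast; nlinarith
        exact_mod_cast this
    refine Set.mem_iUnion₂.2 ⟨(⌊(N : ℝ) * x 0 0⌋, ⌊(N : ℝ) * x 0 1⌋, ⌊(N : ℝ) * x 1 0⌋), ?_,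
      hx, rfl, rfl, rfl⟩
    refine Finset.mem_product.2 ⟨?_, Finset.mem_product.2 ⟨side _ x01, side _ x10⟩⟩
    rw [hI, Finset.mem_Icc]
    constructor
    · rw [Int.le_floor]; push_cast; nlinarith
    · have : ((⌊(N : ℝ) * x 0 0⌋ : ℤ) : ℝ) ≤ ((2 * N : ℤ) : ℝ) := by
        refine (Int.floor_le _).trans ?_
        push_cast; nlinarith
      exact_mod_cast this
  have hone : ∀ c, m (cell c) ≤ m (ballSL δ) := by
    intro c
    rcases (cell c).eq_empty_or_nonempty with h | ⟨x, hx⟩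
    · rw [h, measure_empty]; exact zero_le
    · rw [← hinv x⁻¹ (ballSL δ)]
      refine measure_mono fun y hy => ?_
      exact inv_mul_mem_ballSL hN hδ hx.1 hy.1 (hx.2.1.trans hy.2.1.symm)
        (hx.2.2.1.trans hy.2.2.1.symm) (hx.2.2.2.trans hy.2.2.2.symm)
  have hcard : (I ×ˢ J ×ˢ J).card ≤ (3 * N) ^ 3 := by
    rw [Finset.card_product, Finset.card_product, hI, hJ, Int.card_Icc, Int.card_Icc]
    have e1 : (2 * (N : ℤ) + 1 - 0).toNat ≤ 3 * N := by omega
    have e2 : ((N : ℤ) + 1 - -(N : ℤ)).toNat ≤ 3 * N := by omega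
    calc _ ≤ (3 * N) * ((3 * N) * (3 * N)) := Nat.mul_le_mul e1 (Nat.mul_le_mul e2 e2)
      _ = _ := by ring
  calc m (ballSL (1 / 4)) ≤ m (⋃ c ∈ I ×ˢ J ×ˢ J, cell c) := measure_mono hcov
    _ ≤ ∑ c ∈ I ×ˢ J ×ˢ J, m (cell c) := measure_biUnion_finset_le _ _
    _ ≤ ∑ c ∈ I ×ˢ J ×ˢ J, m (ballSL δ) := Finset.sum_le_sum fun c _ => hone c
    _ = ((I ×ˢ J ×ˢ J).card : ENNReal) * m (ballSL δ) := by
      rw [Finset.sum_const, nsmul_eq_mul]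
    _ ≤ _ := by gcongr

theorem ball_volume_lower (m : Measure SL2R)
    (hinv : ∀ (g : SL2R) (s : Set SL2R), m ((fun x => g * x) ⁻¹' s) = m s)
    (hfin : ∀ r : ℝ, 0 < r → 0 < m (ballSL r) ∧ m (ballSL r) < ⊤)
    {δ : ℝ} (hδ : 0 < δ) (hδ1 : δ ≤ 1) :
    (m (ballSL (1 / 4))).toReal / 33 ^ 3 * δ ^ 3 ≤ (m (ballSL δ)).toReal := by
  set N : ℕ := ⌈10 / δ⌉₊ with hNdef
  have hpos : 0 < 10 / δ := by positivity
  have hN : 0 < N := Nat.ceil_pos.2 hpos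
  have hN1 : 10 / δ ≤ N := Nat.le_ceil _
  have hN2 : (N : ℝ) < 10 / δ + 1 := Nat.ceil_lt_add_one hpos.le
  have hN' : (0 : ℝ) < N := by exact_mod_cast hN
  have h1 : 10 / (N : ℝ) ≤ δ := by
    rw [div_le_iff₀ hN']
    rw [div_le_iff₀ hδ] at hN1
    linarith
  have h2 : (N : ℝ) * δ ≤ 11 := by
    have : (10 / δ + 1) * δ = 10 + δ := by field_simp
    nlinarith
  have h3 := ENNReal.toReal_mono
    (ENNReal.mul_ne_top (ENNReal.natCast_ne_top _) (hfin δ hδ).2.ne) (measure_ball_le m hinv hN h1)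
  rw [ENNReal.toReal_mul, ENNReal.toReal_natCast] at h3
  push_cast at h3
  have h4 : ((N : ℝ) * δ) ^ 3 ≤ 11 ^ 3 := pow_le_pow_left₀ (by positivity) h2 3
  set V := (m (ballSL δ)).toReal
  have hV : 0 ≤ V := ENNReal.toReal_nonneg
  have h5 := mul_le_mul_of_nonneg_right h3 (by positivity : 0 ≤ δ ^ 3)
  have h6 := mul_le_mul_of_nonneg_left h4 hV
  nlinarith

/-! ### Mass and supremum of the smoothed walk -/

theorem measurable_entry (i j : Fin 2) :
    Measurable fun x : SL2R => (x : Matrix (Fin 2) (Fin 2) ℝ) i j :=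
  (measurable_pi_apply j).comp ((measurable_pi_apply i).comp (comap_measurable
    (fun g : SL2R => fun i j => (g : Matrix (Fin 2) (Fin 2) ℝ) i j)))

theorem measurable_mul_left_SL (g : SL2R) : Measurable fun x : SL2R => g * x := by
  refine measurable_comap_iff.2 ?_
  refine measurable_pi_iff.2 fun i => measurable_pi_iff.2 fun j => ?_
  simp only [Function.comp_def, Matrix.SpecialLinearGroup.coe_mul, Matrix.mul_apply,
    Fin.sum_univ_two]
  exact ((measurable_entry 0 j).const_mul _).add ((measurable_entry 1 j).const_mul _)

theorem measurableSet_ballSL (r : ℝ) : MeasurableSet (ballSL r) := by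
  unfold ballSL frobDistSL
  refine measurableSet_le ?_ measurable_const
  refine Real.continuous_sqrt.measurable.comp ?_
  exact Finset.measurable_sum _ fun i _ => Finset.measurable_sum _ fun j _ =>
    ((measurable_entry i j).sub_const _).pow_const 2

theorem measurable_nuPow (𝒢 : Finset SL2R) {f : SL2R → ℝ} (hf : Measurable f) (n : ℕ) :
    Measurable (nuPow 𝒢 f n) := by
  induction n with
  | zero => exact hf
  | succ n ih =>
    exact (Finset.measurable_sum _ fun g _ => (ih.comp (measurable_mul_left_SL g⁻¹)).add
      (ih.comp (measurable_mul_left_SL g))).const_mul _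

theorem nuPow_nonneg (𝒢 : Finset SL2R) {f : SL2R → ℝ} (hf : ∀ x, 0 ≤ f x) (n : ℕ) (x : SL2R) :
    0 ≤ nuPow 𝒢 f n x := by
  induction n generalizing x with
  | zero => exact hf x
  | succ n ih =>
    exact mul_nonneg (by positivity) (Finset.sum_nonneg fun g _ => add_nonneg (ih _) (ih _))

/-- Further averaging cannot raise an upper bound. -/
theorem nuPow_le_of_le (𝒢 : Finset SL2R) (h𝒢 : 0 < 𝒢.card) {f : SL2R → ℝ} {n l : ℕ} (hnl : n ≤ l)
    {K : ℝ} (hK : ∀ x, nuPow 𝒢 f n x ≤ K) (x : SL2R) : nuPow 𝒢 f l x ≤ K := by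
  induction l, hnl using Nat.le_induction generalizing x with
  | base => exact hK x
  | succ l _ ih =>
    have h𝒢' : (0 : ℝ) < 𝒢.card := by exact_mod_cast h𝒢
    change (2 * (𝒢.card : ℝ))⁻¹ * ∑ g ∈ 𝒢, (nuPow 𝒢 f l (g⁻¹ * x) + nuPow 𝒢 f l (g * x)) ≤ K
    have h : ∑ g ∈ 𝒢, (nuPow 𝒢 f l (g⁻¹ * x) + nuPow 𝒢 f l (g * x)) ≤ ∑ g ∈ 𝒢, (K + K) :=
      Finset.sum_le_sum fun g _ => add_le_add (ih _) (ih _)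
    rw [Finset.sum_const, nsmul_eq_mul] at h
    rw [inv_mul_le_iff₀ (by positivity)]
    linarith

theorem lintegral_nuPow (m : Measure SL2R)
    (hinv : ∀ (g : SL2R) (s : Set SL2R), m ((fun x => g * x) ⁻¹' s) = m s)
    (𝒢 : Finset SL2R) (h𝒢 : 0 < 𝒢.card) {f : SL2R → ℝ} (hf : Measurable f)
    (hf0 : ∀ x, 0 ≤ f x) (n : ℕ) :
    ∫⁻ x, ENNReal.ofReal (nuPow 𝒢 f n x) ∂m = ∫⁻ x, ENNReal.ofReal (f x) ∂m := by
  have hmp : ∀ g : SL2R, MeasurePreserving (fun x => g * x) m m := fun g =>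
    ⟨measurable_mul_left_SL g, Measure.ext fun s hs => by
      rw [Measure.map_apply (measurable_mul_left_SL g) hs, hinv]⟩
  induction n with
  | zero => rfl
  | succ n ih =>
    have hm : Measurable fun x => ENNReal.ofReal (nuPow 𝒢 f n x) :=
      (measurable_nuPow 𝒢 hf n).ennreal_ofReal
    have hcomp : ∀ g : SL2R, ∫⁻ x, ENNReal.ofReal (nuPow 𝒢 f n (g * x)) ∂m =
        ∫⁻ x, ENNReal.ofReal (f x) ∂m := fun g => by
      rw [← ih]; exact (hmp g).lintegral_comp hm
    have hmg : ∀ g : SL2R, Measurable fun x => ENNReal.ofReal (nuPow 𝒢 f n (g * x)) := fun g =>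
      hm.comp (measurable_mul_left_SL g)
    have hmg2 : ∀ g ∈ 𝒢, Measurable fun x => ENNReal.ofReal (nuPow 𝒢 f n (g⁻¹ * x)) +
        ENNReal.ofReal (nuPow 𝒢 f n (g * x)) := fun g _ => (hmg g⁻¹).add (hmg g)
    have hexp : ∀ x, ENNReal.ofReal (nuPow 𝒢 f (n + 1) x) =
        ENNReal.ofReal (2 * (𝒢.card : ℝ))⁻¹ * ∑ g ∈ 𝒢, (ENNReal.ofReal (nuPow 𝒢 f n (g⁻¹ * x)) +
          ENNReal.ofReal (nuPow 𝒢 f n (g * x))) := by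
      intro x
      change ENNReal.ofReal ((2 * (𝒢.card : ℝ))⁻¹ *
        ∑ g ∈ 𝒢, (nuPow 𝒢 f n (g⁻¹ * x) + nuPow 𝒢 f n (g * x))) = _
      rw [ENNReal.ofReal_mul (by positivity), ENNReal.ofReal_sum_of_nonneg fun g _ =>
        add_nonneg (nuPow_nonneg 𝒢 hf0 n _) (nuPow_nonneg 𝒢 hf0 n _)]
      congr 1
      exact Finset.sum_congr rfl fun g _ =>
        ENNReal.ofReal_add (nuPow_nonneg 𝒢 hf0 n _) (nuPow_nonneg 𝒢 hf0 n _)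
    simp_rw [hexp]
    rw [lintegral_const_mul _ (Finset.measurable_sum _ hmg2), lintegral_finsetSum _ hmg2]
    have : ∀ g ∈ 𝒢, ∫⁻ x, (ENNReal.ofReal (nuPow 𝒢 f n (g⁻¹ * x)) +
        ENNReal.ofReal (nuPow 𝒢 f n (g * x))) ∂m = 2 * ∫⁻ x, ENNReal.ofReal (f x) ∂m := by
      intro g _
      rw [lintegral_add_left (hmg g⁻¹), hcomp, hcomp, two_mul]
    rw [Finset.sum_congr rfl this, Finset.sum_const, nsmul_eq_mul, ← mul_assoc, ← mul_assoc]
    have h𝒢' : (0 : ℝ) < 𝒢.card := by exact_mod_cast h𝒢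
    have hc : ENNReal.ofReal (2 * (𝒢.card : ℝ))⁻¹ * (𝒢.card : ENNReal) * 2 = 1 := by
      rw [← ENNReal.ofReal_natCast, ← ENNReal.ofReal_ofNat 2, ← ENNReal.ofReal_mul (by positivity),
        ← ENNReal.ofReal_mul (by positivity), ← ENNReal.ofReal_one]
      congr 1
      field_simp
    rw [hc, one_mul]

/-- The interpolation `‖f‖₂² ≤ ‖f‖_∞ ‖f‖₁`. -/
theorem eLpNorm_two_le (m : Measure SL2R) {f : SL2R → ℝ} (hf : Measurable f) (hf0 : ∀ x, 0 ≤ f x)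
    {T : ℝ} (hT : 0 ≤ T) (hfT : ∀ x, f x ≤ T ^ 2)
    (hmass : ∫⁻ x, ENNReal.ofReal (f x) ∂m ≤ 1) : eLpNorm f 2 m ≤ ENNReal.ofReal T := by
  rw [eLpNorm_eq_lintegral_rpow_enorm_toReal (by norm_num) (by norm_num), ENNReal.toReal_ofNat]
  rw [one_div, ENNReal.rpow_inv_le_iff (by norm_num)]
  have hpt : ∀ x, ‖f x‖ₑ ^ (2 : ℝ) ≤ ENNReal.ofReal (T ^ 2) * ENNReal.ofReal (f x) := by
    intro x
    rw [Real.enorm_eq_ofReal (hf0 x), ENNReal.rpow_two, pow_two]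
    gcongr
    exact hfT x
  refine (lintegral_mono hpt).trans ?_
  rw [lintegral_const_mul _ hf.ennreal_ofReal, ENNReal.rpow_two, ← ENNReal.ofReal_pow hT]
  calc _ ≤ ENNReal.ofReal (T ^ 2) * 1 := by gcongr
    _ = _ := mul_one _

theorem Pdelta_nonneg (m : Measure SL2R) (δ : ℝ) (x : SL2R) : 0 ≤ Pdelta m δ x :=
  Set.indicator_nonneg (fun _ _ => inv_nonneg.2 ENNReal.toReal_nonneg) x

theorem measurable_Pdelta (m : Measure SL2R) (δ : ℝ) : Measurable (Pdelta m δ) :=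
  measurable_const.indicator (measurableSet_ballSL δ)

theorem lintegral_Pdelta (m : Measure SL2R) {δ : ℝ} (h0 : 0 < m (ballSL δ))
    (h1 : m (ballSL δ) < ⊤) : ∫⁻ x, ENNReal.ofReal (Pdelta m δ x) ∂m = 1 := by
  have : (fun x => ENNReal.ofReal (Pdelta m δ x)) =
      (ballSL δ).indicator fun _ => (m (ballSL δ))⁻¹ := by
    funext x
    unfold Pdelta
    by_cases hx : x ∈ ballSL δ
    · rw [Set.indicator_of_mem hx, Set.indicator_of_mem hx,
        ENNReal.ofReal_inv_of_pos (ENNReal.toReal_pos h0.ne' h1.ne), ENNReal.ofReal_toReal h1.ne]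
    · rw [Set.indicator_of_notMem hx, Set.indicator_of_notMem hx, ENNReal.ofReal_zero]
  rw [this, lintegral_indicator_const (measurableSet_ballSL δ), ENNReal.inv_mul_cancel h0.ne' h1.ne]

/-- As long as `4 δ Q²ⁿ < 1`, the points `φ(w)` with `|w| ≤ n` are separated at scale `δ`, so that
along the orbit of any `x` at most one of them contributes; Kesten's bound then controls the supremum
of `ν^{(n)} ∗ P_δ`. -/
theorem nuPow_Pdelta_le (m : Measure SL2R) (𝒢 : Finset SL2R) (h𝒢 : 0 < 𝒢.card) {Q : ℕ}
    (hQ : 0 < Q)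
    (hfree : Function.Injective ⇑(FreeGroup.lift fun g : {x // x ∈ 𝒢} => (g : SL2R)))
    (hent : ∀ g ∈ 𝒢, EntriesIn Q 1 g) {δ : ℝ} (hδ : δ ≤ 1 / 2) {n : ℕ}
    (hn : (Q : ℝ) ^ (2 * n) * (4 * δ) < 1) (x : SL2R) :
    nuPow 𝒢 (Pdelta m δ) n x ≤
      ((m (ballSL δ)).toReal)⁻¹ * (2 / Real.sqrt (2 * (𝒢.card : ℝ))) ^ n := by
  classical
  set φ := FreeGroup.lift fun g : {x // x ∈ 𝒢} => (g : SL2R) with hφ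
  set M := ((m (ballSL δ)).toReal)⁻¹ with hM
  have hM0 : 0 ≤ M := inv_nonneg.2 ENNReal.toReal_nonneg
  have h𝒢' : (0 : ℝ) < 𝒢.card := by exact_mod_cast h𝒢
  have hs : 0 < Real.sqrt (2 * (𝒢.card : ℝ)) := Real.sqrt_pos.2 (by positivity)
  have hs2 := Real.sq_sqrt (by positivity : 0 ≤ 2 * (𝒢.card : ℝ))
  -- two short words moving `x` into the ball differ by a short word that is near the identity
  have huniq : ∀ w w' : FreeGroup {x // x ∈ 𝒢}, w.norm ≤ n → w'.norm ≤ n →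
      φ w * x ∈ ballSL δ → φ w' * x ∈ ballSL δ → w = w' := by
    intro w w' hw hw' h h'
    have e : φ w * x * (φ w' * x)⁻¹ = φ (w * w'⁻¹) := by
      rw [map_mul, map_inv]; group
    have hE : EntriesIn Q (w * w'⁻¹).norm (φ (w * w'⁻¹)) := by
      have := entriesIn_lift 𝒢 Q hent (w * w'⁻¹).toWord
      rwa [FreeGroup.mk_toWord] at this
    have hlen : (w * w'⁻¹).norm ≤ 2 * n := by
      have := FreeGroup.norm_mul_le w w'⁻¹
      rw [FreeGroup.norm_inv_eq] at this
      omega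
    have hδ0 : 0 ≤ δ := (abs_nonneg _).trans (entries_of_mem_ballSL h 0 0)
    have hsmall : (Q : ℝ) ^ (w * w'⁻¹).norm * (4 * δ) < 1 := by
      refine lt_of_le_of_lt (mul_le_mul_of_nonneg_right ?_ (by positivity)) hn
      exact pow_le_pow_right₀ (by exact_mod_cast hQ) hlen
    have h1 := eq_one_of_small hE hsmall (by rw [← e]; exact mul_inv_near_one hδ h h') hQ
    rw [← map_one φ] at h1
    exact mul_inv_eq_one.1 (hfree h1)
  obtain ⟨w₀, hw₀⟩ : ∃ w₀ : FreeGroup {x // x ∈ 𝒢}, ∀ w : FreeGroup {x // x ∈ 𝒢}, w.norm ≤ n →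
      Pdelta m δ (φ w * x) ≤ if w = w₀ then M else 0 := by
    by_cases hex : ∃ w₀ : FreeGroup {x // x ∈ 𝒢}, w₀.norm ≤ n ∧ φ w₀ * x ∈ ballSL δ
    · obtain ⟨w₀, h1, h2⟩ := hex
      refine ⟨w₀, fun w hw => ?_⟩
      unfold Pdelta
      by_cases hb : φ w * x ∈ ballSL δ
      · rw [if_pos (huniq w w₀ hw h1 hb h2), Set.indicator_of_mem hb]
      · rw [Set.indicator_of_notMem hb]
        split_ifs <;> simp [hM0]
    · push Not at hex
      refine ⟨1, fun w hw => ?_⟩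
      unfold Pdelta
      rw [Set.indicator_of_notMem (hex w hw)]
      split_ifs <;> simp [hM0]
  have h := nuPow_le_kesten 𝒢 (Pdelta m δ) M _ hM0 hs hs2 n x w₀
    (fun w hw => by convert hw₀ w hw) n 1 (by simp)
  rw [map_one, one_mul] at h
  refine h.trans ?_
  have h1 : (1 : ℝ) ≤ Real.sqrt (2 * (𝒢.card : ℝ)) := by
    rw [Real.one_le_sqrt]
    have : (1 : ℝ) ≤ 𝒢.card := by exact_mod_cast h𝒢
    linarith
  have h2 : (Real.sqrt (2 * (𝒢.card : ℝ)))⁻¹ ^ (1 * w₀⁻¹).norm ≤ 1 :=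
    pow_le_one₀ (by positivity) (inv_le_one_of_one_le₀ h1)
  exact mul_le_of_le_one_right (by positivity) h2

/-! ### Choice of parameters -/

/-- For `ε ≤ 4^{-C²}` the size conditions on `Q` and `k = |𝒢|` force `k ≥ 4`, which is where Kesten's
bound `(2 / k)^{1/2}` drops below `k^{-1/4}`. -/
theorem card_large {C ε : ℝ} (hC : 0 < C) (hε : 0 < ε) (hε0 : ε ≤ (4 : ℝ) ^ (-(C ^ 2)))
    {q k : ℝ} (hk : 0 ≤ k) (h1 : (1 / ε) ^ (1 / C) < q) (h2 : q < k ^ C) :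
    1 < q ∧ 4 ≤ k ∧ q ^ (1 / C) ≤ k := by
  have h4 : (4 : ℝ) ^ (C ^ 2) ≤ 1 / ε := by
    rw [le_one_div (by positivity) hε, one_div, ← Real.rpow_neg (by norm_num)]
    exact hε0
  have h5 : (4 : ℝ) ^ C ≤ (1 / ε) ^ (1 / C) := by
    have := Real.rpow_le_rpow (by positivity) h4 (by positivity : 0 ≤ 1 / C)
    rwa [← Real.rpow_mul (by norm_num), show C ^ 2 * (1 / C) = C by field_simp] at this
  have h6 : (4 : ℝ) ^ C < q := h5.trans_lt h1
  have h7 : (1 : ℝ) < 4 ^ C := Real.one_lt_rpow (by norm_num) hC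
  refine ⟨h7.trans h6, ?_, ?_⟩
  · exact ((Real.rpow_lt_rpow_iff (by norm_num) hk hC).1 (h6.trans h2)).le
  · have := Real.rpow_le_rpow (by linarith) h2.le (by positivity : 0 ≤ 1 / C)
    rwa [← Real.rpow_mul hk, mul_one_div_cancel hC.ne', Real.rpow_one] at this

theorem two_div_sqrt_le {C q k : ℝ} (hC : 0 < C) (hq : 1 < q) (hk : 4 ≤ k)
    (hqk : q ^ (1 / C) ≤ k) : 2 / Real.sqrt (2 * k) ≤ q ^ (-(1 / (4 * C))) := by
  have hq0 : 0 < q := by linarith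
  refine le_of_pow_le_pow_left₀ (n := 4) (by norm_num) (by positivity) ?_
  have e1 : (2 / Real.sqrt (2 * k)) ^ 4 = 4 / k ^ 2 := by
    have := Real.sq_sqrt (by linarith : 0 ≤ 2 * k)
    rw [div_pow, show Real.sqrt (2 * k) ^ 4 = (Real.sqrt (2 * k) ^ 2) ^ 2 by ring, this]
    field_simp
    norm_num
  have e2 : (q ^ (-(1 / (4 * C)))) ^ 4 = (q ^ (1 / C))⁻¹ := by
    rw [← Real.rpow_natCast, ← Real.rpow_mul hq0.le, ← Real.rpow_neg hq0.le]
    congr 1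
    push_cast
    field_simp
  rw [e1, e2]
  calc 4 / k ^ 2 ≤ k⁻¹ := by
        rw [div_le_iff₀ (by positivity), pow_two, inv_mul_cancel_left₀ (by linarith)]
        exact hk
    _ ≤ (q ^ (1 / C))⁻¹ := inv_anti₀ (by positivity) hqk

/-- Initial flatness for an arbitrary prescribed constant `C > 0` in the size conditions, with `γ` and
`ε₀` depending only on `C`. -/
theorem initial_flatness_of_constant (C : ℝ) (hC : 0 < C) :
    ∃ γ ε₀ : ℝ, 0 < γ ∧ 0 < ε₀ ∧
      ∀ m : Measure SL2R,
        (∀ (g : SL2R) (s : Set SL2R), m ((fun x => g * x) ⁻¹' s) = m s) →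
        (∀ r : ℝ, 0 < r → 0 < m (ballSL r) ∧ m (ballSL r) < ⊤) →
        ∀ ε : ℝ, 0 < ε → ε ≤ ε₀ →
          ∀ (𝒢 : Finset SL2R) (Q : ℕ), 0 < Q →
            (1 / ε) ^ (1 / C) < (Q : ℝ) → (Q : ℝ) < (1 / ε) ^ C →
            (Q : ℝ) < (𝒢.card : ℝ) ^ C →
            Function.Injective
              ⇑(FreeGroup.lift fun g : {x // x ∈ 𝒢} => (g : SL2R)) →
            (∀ g ∈ 𝒢, ∀ i j : Fin 2,
              ∃ z : ℤ, (g : Matrix (Fin 2) (Fin 2) ℝ) i j = (z : ℝ) / (Q : ℝ)) →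
            (∀ g ∈ 𝒢, frobDistSL g 1 ^ 2 ≤ ε) →
            ∃ δ₀ : ℝ, 0 < δ₀ ∧
              ∀ δ : ℝ, 0 < δ → δ ≤ δ₀ →
                ∀ ℓ₀ : ℕ, Real.log (1 / δ) / Real.log (Q : ℝ) ≤ (ℓ₀ : ℝ) →
                  eLpNorm (nuPow 𝒢 (Pdelta m δ) ℓ₀) 2 m ≤
                    ENNReal.ofReal (δ ^ (-(3:ℝ)/2 + γ)) := by
  refine ⟨1 / (48 * C), (4 : ℝ) ^ (-(C ^ 2)), by positivity, by positivity, ?_⟩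
  intro m hinv hfin ε hε hε0 𝒢 Q hQ hQ1 _ hQ2 hfree hent _
  obtain ⟨hq, hk, hqk⟩ := card_large hC hε hε0 (Nat.cast_nonneg _) hQ1 hQ2
  have hκ := two_div_sqrt_le hC hq hk hqk
  have h𝒢 : 0 < 𝒢.card := by
    have : (0 : ℝ) < 𝒢.card := by linarith
    exact_mod_cast this
  have hQ0 : (0 : ℝ) < Q := by exact_mod_cast hQ
  have hent' : ∀ g ∈ 𝒢, EntriesIn Q 1 g := by
    intro g hg i j
    obtain ⟨z, hz⟩ := hent g hg i j
    exact ⟨z, by rw [hz, pow_one]; field_simp⟩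
  have hlogQ : 0 < Real.log Q := Real.log_pos hq
  set c : ℝ := (m (ballSL (1 / 4))).toReal / 33 ^ 3 with hc
  have hc0 : 0 < c := by
    have := hfin (1 / 4) (by norm_num)
    have := ENNReal.toReal_pos this.1.ne' this.2.ne
    positivity
  set K : ℝ := c⁻¹ * (Q : ℝ) ^ (1 / (4 * C)) with hK
  have hK0 : 0 < K := by positivity
  refine ⟨min (1 / 65) (K ^ (-(24 * C))), by positivity, ?_⟩
  intro δ hδ hδ0 ℓ₀ hℓ
  have hδ1 : δ ≤ 1 / 65 := hδ0.trans (min_le_left _ _)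
  have hδ2 : δ ≤ K ^ (-(24 * C)) := hδ0.trans (min_le_right _ _)
  have hlogδ : Real.log δ < -(3 * Real.log 4) := by
    rw [show -(3 * Real.log 4) = Real.log (1 / 64) by
      rw [one_div, Real.log_inv, show (64 : ℝ) = 4 ^ 3 by norm_num, Real.log_pow]; norm_num]
    exact Real.log_lt_log hδ (by linarith)
  have hlog4 : 0 < Real.log 4 := Real.log_pos (by norm_num)
  -- `n` is chosen so that `Q ^ (3 n)` is at most `1 / δ` and, up to a factor `Q ^ 3`, not smaller
  set n : ℕ := ⌊Real.log (1 / δ) / Real.log Q / 3⌋₊ with hn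
  have hlog1 : Real.log (1 / δ) = -Real.log δ := by rw [one_div, Real.log_inv]
  rw [hlog1] at hn hℓ
  have hL0 : 0 ≤ -Real.log δ / Real.log Q := div_nonneg (by linarith) hlogQ.le
  have hn1 : (n : ℝ) ≤ -Real.log δ / Real.log Q / 3 := hn ▸ Nat.floor_le (by positivity)
  have hn2 : -Real.log δ / Real.log Q / 3 < n + 1 := hn ▸ Nat.lt_floor_add_one _
  have hnℓ : n ≤ ℓ₀ := by
    have : (n : ℝ) ≤ ℓ₀ := by linarith
    exact_mod_cast this
  have hn1' : (n : ℝ) * Real.log Q ≤ -Real.log δ / 3 := by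
    have := mul_le_mul_of_nonneg_right hn1 hlogQ.le
    rwa [show -Real.log δ / Real.log Q / 3 * Real.log Q = -Real.log δ / 3 by field_simp] at this
  have hn2' : -Real.log δ / 3 < (n + 1) * Real.log Q := by
    have := mul_lt_mul_of_pos_right hn2 hlogQ
    rwa [show -Real.log δ / Real.log Q / 3 * Real.log Q = -Real.log δ / 3 by field_simp] at this
  have hsep : (Q : ℝ) ^ (2 * n) * (4 * δ) < 1 := by
    rw [← Real.log_neg_iff (by positivity), Real.log_mul (by positivity) (by positivity),
      Real.log_mul (by norm_num) hδ.ne', Real.log_pow]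
    push_cast
    linarith
  have hdecay : (2 / Real.sqrt (2 * (𝒢.card : ℝ))) ^ n ≤
      (Q : ℝ) ^ (1 / (4 * C)) * δ ^ (1 / (12 * C)) := by
    refine (pow_le_pow_left₀ (by positivity) hκ n).trans ?_
    rw [← Real.rpow_natCast, ← Real.rpow_mul hQ0.le, Real.rpow_def_of_pos hQ0,
      Real.rpow_def_of_pos hQ0, Real.rpow_def_of_pos hδ, ← Real.exp_add]
    refine Real.exp_le_exp.2 ?_
    have e : Real.log Q * (1 / (4 * C)) + Real.log δ * (1 / (12 * C)) -
        Real.log Q * (-(1 / (4 * C)) * n) =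
        ((n + 1) * Real.log Q - -Real.log δ / 3) * (1 / (4 * C)) := by
      field_simp
      ring
    have : 0 ≤ ((n + 1) * Real.log Q - -Real.log δ / 3) * (1 / (4 * C)) :=
      mul_nonneg (by linarith) (by positivity)
    linarith
  have hvol := ball_volume_lower m hinv hfin hδ (by linarith)
  have hVinv : ((m (ballSL δ)).toReal)⁻¹ ≤ c⁻¹ * δ ^ (-3 : ℝ) := by
    refine (inv_anti₀ (by positivity) hvol).trans (le_of_eq ?_)
    rw [← hc, mul_inv, Real.rpow_neg hδ.le, show (3 : ℝ) = ((3 : ℕ) : ℝ) by norm_num,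
      Real.rpow_natCast]
  have habsorb : K * δ ^ (1 / (24 * C)) ≤ 1 := by
    have := Real.rpow_le_rpow hδ.le hδ2 (by positivity : 0 ≤ 1 / (24 * C))
    rw [← Real.rpow_mul hK0.le, show -(24 * C) * (1 / (24 * C)) = -1 by field_simp,
      Real.rpow_neg_one] at this
    calc _ ≤ K * K⁻¹ := by gcongr
      _ = 1 := mul_inv_cancel₀ hK0.ne'
  refine eLpNorm_two_le m (measurable_nuPow 𝒢 (measurable_Pdelta m δ) ℓ₀)
    (nuPow_nonneg 𝒢 (Pdelta_nonneg m δ) ℓ₀) (by positivity) ?_ ?_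
  · refine nuPow_le_of_le 𝒢 h𝒢 hnℓ fun x => ?_
    refine (nuPow_Pdelta_le m 𝒢 h𝒢 hQ hfree hent' (by linarith) hsep x).trans ?_
    calc ((m (ballSL δ)).toReal)⁻¹ * (2 / Real.sqrt (2 * (𝒢.card : ℝ))) ^ n
        ≤ (c⁻¹ * δ ^ (-3 : ℝ)) * ((Q : ℝ) ^ (1 / (4 * C)) * δ ^ (1 / (12 * C))) := by
          gcongr
      _ = (K * δ ^ (1 / (24 * C))) * δ ^ (-3 + 1 / (24 * C)) := by
          have e : δ ^ (1 / (12 * C)) = δ ^ (1 / (24 * C)) * δ ^ (1 / (24 * C)) := by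
            rw [← Real.rpow_add hδ]; congr 1; field_simp; norm_num
          rw [Real.rpow_add hδ, e, hK]
          ring
      _ ≤ 1 * δ ^ (-3 + 1 / (24 * C)) := by gcongr
      _ = (δ ^ (-(3:ℝ)/2 + 1 / (48 * C))) ^ 2 := by
          rw [one_mul, ← Real.rpow_natCast, ← Real.rpow_mul hδ.le]
          congr 1
          push_cast
          field_simp
          ring
  · rw [lintegral_nuPow m hinv 𝒢 h𝒢 (measurable_Pdelta m δ) (Pdelta_nonneg m δ),
      lintegral_Pdelta m (hfin δ hδ).1 (hfin δ hδ).2]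

/-- **Initial flatness (Kesten bound).** There are universal constants `γ, ε₀ > 0`
(together with the constant `C` of the generating-set lemma) such that for every Haar
measure `m` on `SL₂(ℝ)` and every `𝒢, Q` as in the generating-set lemma with `ε ≤ ε₀`,
for all sufficiently small `δ > 0` and every integer `ℓ₀ ≥ log(1/δ)/log Q`, the density
`μ = ν^{(ℓ₀)} ∗ P_δ` satisfies `‖μ‖₂ ≤ δ^{−3/2+γ}`. -/
theorem initial_flatness :
    ∃ C γ ε₀ : ℝ, 0 < C ∧ 0 < γ ∧ 0 < ε₀ ∧
      ∀ m : Measure SL2R,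
        (∀ (g : SL2R) (s : Set SL2R), m ((fun x => g * x) ⁻¹' s) = m s) →
        (∀ r : ℝ, 0 < r → 0 < m (ballSL r) ∧ m (ballSL r) < ⊤) →
        ∀ ε : ℝ, 0 < ε → ε ≤ ε₀ →
          ∀ (𝒢 : Finset SL2R) (Q : ℕ), 0 < Q →
            (1 / ε) ^ (1 / C) < (Q : ℝ) → (Q : ℝ) < (1 / ε) ^ C →
            (Q : ℝ) < (𝒢.card : ℝ) ^ C →
            Function.Injective
              ⇑(FreeGroup.lift fun g : {x // x ∈ 𝒢} => (g : SL2R)) →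
            (∀ g ∈ 𝒢, ∀ i j : Fin 2,
              ∃ z : ℤ, (g : Matrix (Fin 2) (Fin 2) ℝ) i j = (z : ℝ) / (Q : ℝ)) →
            (∀ g ∈ 𝒢, frobDistSL g 1 ^ 2 ≤ ε) →
            ∃ δ₀ : ℝ, 0 < δ₀ ∧
              ∀ δ : ℝ, 0 < δ → δ ≤ δ₀ →
                ∀ ℓ₀ : ℕ, Real.log (1 / δ) / Real.log (Q : ℝ) ≤ (ℓ₀ : ℝ) →
                  eLpNorm (nuPow 𝒢 (Pdelta m δ) ℓ₀) 2 m ≤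
                    ENNReal.ofReal (δ ^ (-(3:ℝ)/2 + γ)) := by
  -- any `C > 0` is admissible; for `C > 1` the window for `Q` is nonempty when `ε < 1`
  obtain ⟨γ, ε₀, hγ, hε₀, h⟩ := initial_flatness_of_constant 10 (by norm_num)
  exact ⟨10, γ, ε₀, by norm_num, hγ, hε₀, h⟩
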